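/- Let K ⊆ ℝ² be a compact convex set with nonempty interior, with area A, boundary length L, circumradius R and inradius r. Then the Bonnesen-type inequality L² − 4πA ≥ L²·((R − r)/(R + r))² holds. -/

import Mathlib

open Set MeasureTheory

noncomputable section

/-- The inradius of a set `K ⊆ ℝ²`: the supremum of radii `ρ ≥ 0` of closed balls
contained in `K`. -/
def inradius (K : Set (EuclideanSpace ℝ (Fin 2))) : ℝ :=
  sSup { ρ : ℝ | 0 ≤ ρ ∧ ∃ c : EuclideanSpace ℝ (Fin 2), Metric.closedBall c ρ ⊆ K }

/-- The circumradius of a set `K ⊆ ℝ²`: the infimum of radii `ρ ≥ 0` of closed balls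
containing `K`. -/
def circumradius (K : Set (EuclideanSpace ℝ (Fin 2))) : ℝ :=
  sInf { ρ : ℝ | 0 ≤ ρ ∧ ∃ c : EuclideanSpace ℝ (Fin 2), K ⊆ Metric.closedBall c ρ }

/-!
Bonnesen's inequality `A ≤ ρ L - π ρ²` for `ρ = r` and `ρ = R` implies the claim: according to
whether `L ≥ π (R + r)` or not, multiplying one of the two by `(R + r)²` gives
`π A (R + r)² ≤ R r L²`, which is the claim cleared of denominators.

Bonnesen's inequality is proved on the `2 * M` equally spaced directions `u k`. Let `h k` be the
values of the support function of `K` and write `h k = e k + t + ⟪u k, c⟫`, where the ball with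
centre `c` and radius `t` is extremal for the polygon `⋂ {x | ⟪u k, x⟫ ≤ h k}` (largest inscribed,
or smallest with `h k ≤ t + ⟪u k, c⟫` for all `k`). By extremality its contact directions, the
zeros of `e`, meet every closed half-circle. The area of the polygon is a quadratic form in `h`;
the discrete Wirtinger inequality, valid for functions vanishing in every half-circle, makes the
contribution of `e` nonpositive, and what is left is a discretisation of `t L - π t²`, because
Cauchy's formula (averaging over directions) bounds the sum of the `h k` by `L`. Letting `M → ∞`,
`t` tends to `r` or `R`.
-/

open Filter Topology Real RealInnerProductSpace

/-! ### Rectifiability of the boundary -/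

open Classical in
lemma card_filter_mem_uIoo_le_encard_fiber {f : ℝ → ℝ} {s : Set ℝ} [hs : OrdConnected s]
    (hf : ContinuousOn f s) {u : ℕ → ℝ} (hu : Monotone u) (hus : ∀ i, u i ∈ s) (n : ℕ) (c : ℝ) :
    (((Finset.range n).filter fun i => c ∈ uIoo (f (u i)) (f (u (i + 1)))).card : ℕ∞) ≤
      (s ∩ f ⁻¹' {c}).encard := by
  have crossing (i : ℕ) (hi : c ∈ uIoo (f (u i)) (f (u (i + 1)))) :
      ∃ t ∈ Ioo (u i) (u (i + 1)), f t = c := by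
    have hle := hu (Nat.le_succ i)
    have hfi := hf.mono (hs.out (hus i) (hus (i + 1)))
    rcases le_total (f (u i)) (f (u (i + 1))) with h | h
    · exact intermediate_value_Ioo hle hfi (uIoo_of_le h ▸ hi)
    · exact intermediate_value_Ioo' hle hfi (uIoo_of_ge h ▸ hi)
  choose! t ht htc using crossing
  rw [← encard_coe_eq_coe_finsetCard]
  refine encard_le_encard_of_injOn (f := t) (fun i hi => ?_) fun i hi j hj hij => ?_
  · have hi := (Finset.mem_filter.1 hi).2
    exact ⟨hs.out (hus i) (hus (i + 1)) (Ioo_subset_Icc_self (ht i hi)), htc i hi⟩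
  · by_contra hne
    exact (hu.pairwise_disjoint_on_Ioo_succ hne).ne_of_mem
      (ht i (Finset.mem_filter.1 hi).2) (ht j (Finset.mem_filter.1 hj).2) hij

/- Banach's indicatrix bound: each difference `|f (u (i + 1)) - f (u i)|` is the length of an
interval of values, and a value `c` lies in at most as many of them as it has preimages. -/
lemma eVariationOn_le_mul_volume_image {f : ℝ → ℝ} {s : Set ℝ} [hs : OrdConnected s]
    (hf : ContinuousOn f s) {N : ℕ} (hN : ∀ᵐ c, (s ∩ f ⁻¹' {c}).encard ≤ N) :
    eVariationOn f s ≤ N * volume (f '' s) := by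
  classical
  have himage : OrdConnected (f '' s) := (hs.isPreconnected.image f hf).ordConnected
  refine iSup_le fun ⟨n, u, hu, hus⟩ => ?_
  let I (i : ℕ) : Set ℝ := uIoo (f (u i)) (f (u (i + 1)))
  have hI (i : ℕ) : MeasurableSet (I i) := measurableSet_Ioo
  have hIsub (i : ℕ) : I i ⊆ f '' s := Ioo_subset_Icc_self.trans
    (himage.uIcc_subset (mem_image_of_mem f (hus i)) (mem_image_of_mem f (hus (i + 1))))
  have hcount (c : ℝ) : ∑ i ∈ Finset.range n, (I i).indicator (1 : ℝ → ENNReal) c =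
      ((Finset.range n).filter fun i => c ∈ I i).card := by
    simp only [Finset.card_filter, Nat.cast_sum, indicator_apply, Pi.one_apply, Nat.cast_ite,
      Nat.cast_one, Nat.cast_zero]
  calc ∑ i ∈ Finset.range n, edist (f (u (i + 1))) (f (u i))
      = ∑ i ∈ Finset.range n, ∫⁻ c, (I i).indicator 1 c := by
        refine Finset.sum_congr rfl fun i _ => ?_
        rw [lintegral_indicator_one (hI i), Real.volume_uIoo, edist_dist, Real.dist_eq]
    _ = ∫⁻ c, ∑ i ∈ Finset.range n, (I i).indicator 1 c :=
        (lintegral_finsetSum _ fun i _ => measurable_one.indicator (hI i)).symm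
    _ ≤ ∫⁻ c, (f '' s).indicator (fun _ => (N : ENNReal)) c := by
        refine lintegral_mono_ae (hN.mono fun c hc => ?_)
        by_cases hcs : c ∈ f '' s
        · rw [indicator_of_mem hcs, hcount]
          exact_mod_cast (card_filter_mem_uIoo_le_encard_fiber hf hu hus n c).trans hc
        · rw [indicator_of_notMem hcs, Finset.sum_eq_zero fun i _ =>
            indicator_of_notMem (fun h => hcs (hIsub i h)) _]
    _ = N * volume (f '' s) := lintegral_indicator_const himage.measurableSet _

section ConvexBoundary

variable {E : Type*} [AddCommGroup E] [Module ℝ E] [TopologicalSpace E] [IsTopologicalAddGroup E]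
  [ContinuousSMul ℝ E] {K : Set E}

lemma subsingleton_ray_inter_frontier (hK : Convex ℝ K) {z : E} (hz : z ∈ interior K) (v : E) :
    {t : ℝ | 0 < t ∧ z + t • v ∈ frontier K}.Subsingleton := by
  have not_lt_of_mem {a b : ℝ} (ha : 0 < a) (haf : z + a • v ∈ frontier K)
      (hbf : z + b • v ∈ frontier K) : ¬ a < b := fun hab => haf.2 <| by
    have hb : 0 < b := ha.trans hab
    have h := hK.combo_interior_closure_mem_interior hz hbf.1 (a := 1 - a / b) (b := a / b)
      (sub_pos.2 ((div_lt_one hb).2 hab)) (by positivity) (by ring)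
    rwa [smul_add, smul_smul, div_mul_cancel₀ _ hb.ne', sub_smul, one_smul, ← add_assoc,
      sub_add_cancel] at h
  exact fun a ha b hb => le_antisymm (not_lt.1 (not_lt_of_mem hb.1 hb.2 ha.2))
    (not_lt.1 (not_lt_of_mem ha.1 ha.2 hb.2))

lemma encard_line_inter_frontier_le_two (hK : Convex ℝ K) {z : E} (hz : z ∈ interior K) (v : E) :
    {t : ℝ | z + t • v ∈ frontier K}.encard ≤ 2 := by
  have hneg : {t : ℝ | t < 0 ∧ z + t • v ∈ frontier K}.Subsingleton := fun a ha b hb =>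
    neg_injective <| subsingleton_ray_inter_frontier hK hz (-v)
      ⟨neg_pos.2 ha.1, by simpa using ha.2⟩ ⟨neg_pos.2 hb.1, by simpa using hb.2⟩
  have hsub : {t : ℝ | z + t • v ∈ frontier K} ⊆
      {t | t < 0 ∧ z + t • v ∈ frontier K} ∪ {t | 0 < t ∧ z + t • v ∈ frontier K} := fun t ht => by
    rcases lt_trichotomy t 0 with h | rfl | h
    · exact .inl ⟨h, ht⟩
    · exact absurd hz (by simpa using ht.2)
    · exact .inr ⟨h, ht⟩
  calc {t : ℝ | z + t • v ∈ frontier K}.encard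
      ≤ 1 + 1 := (encard_le_encard hsub).trans <| (encard_union_le _ _).trans <| add_le_add
        (encard_le_one_iff_subsingleton.2 hneg)
        (encard_le_one_iff_subsingleton.2 (subsingleton_ray_inter_frontier hK hz v))
    _ = 2 := one_add_one_eq_two

lemma exists_mem_interior_eq (hK : Convex ℝ K) (hint : (interior K).Nonempty) {f : E → ℝ}
    (hf : Continuous f) {p q : E} (hp : p ∈ K) (hq : q ∈ K) {c : ℝ} (hpc : f p < c)
    (hcq : c < f q) : ∃ z ∈ interior K, f z = c := by
  have hdense : K ⊆ closure (interior K) :=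
    (hK.closure_interior_eq_closure_of_nonempty_interior hint).symm ▸ subset_closure
  obtain ⟨p', hp'c, hp'⟩ := mem_closure_iff.1 (hdense hp) _ (isOpen_Iio.preimage hf) hpc
  obtain ⟨q', hcq', hq'⟩ := mem_closure_iff.1 (hdense hq) _ (isOpen_Ioi.preimage hf) hcq
  exact hK.interior.isPreconnected.intermediate_value hp' hq' hf.continuousOn
    ⟨le_of_lt hp'c, le_of_lt hcq'⟩

lemma encard_frontier_inter_level_le_two (hdim : Module.finrank ℝ E = 2) (hK : Convex ℝ K)
    {f : StrongDual ℝ E} (hf : f ≠ 0) {z : E} (hz : z ∈ interior K) :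
    (frontier K ∩ f ⁻¹' {f z}).encard ≤ 2 := by
  have : FiniteDimensional ℝ E := .of_finrank_pos (by omega)
  have hker : Module.finrank ℝ (LinearMap.ker (f : E →ₗ[ℝ] ℝ)) = 1 := by
    have := Module.Dual.finrank_ker_add_one_of_ne_zero (f := (f : E →ₗ[ℝ] ℝ))
      (by exact_mod_cast hf)
    omega
  obtain ⟨v, -, hv⟩ := finrank_eq_one_iff'.1 hker
  have hsub : frontier K ∩ f ⁻¹' {f z} ⊆
      (fun t : ℝ => z + t • (v : E)) '' {t | z + t • (v : E) ∈ frontier K} := by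
    rintro x ⟨hxK, hxz : f x = f z⟩
    obtain ⟨t, ht⟩ := hv ⟨x - z, by simp [hxz]⟩
    have hx : z + t • (v : E) = x := by
      rw [← Submodule.coe_smul, ht, add_sub_cancel]
    exact ⟨t, by rwa [mem_ofPred, hx], hx⟩
  exact (encard_le_encard hsub).trans <| (encard_image_le _ _).trans <|
    encard_line_inter_frontier_le_two hK hz v

/- Only the values of `f` on its two support lines can have larger fibres. -/
lemma ae_encard_frontier_inter_level_le_two (hdim : Module.finrank ℝ E = 2) (hK : Convex ℝ K)
    (hcomp : IsCompact K) (hclosed : IsClosed K) (hint : (interior K).Nonempty)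
    {f : StrongDual ℝ E} (hf : f ≠ 0) : ∀ᵐ c, (frontier K ∩ f ⁻¹' {c}).encard ≤ 2 := by
  have hne : K.Nonempty := hint.mono interior_subset
  obtain ⟨p, hp, hpmin⟩ := hcomp.exists_isMinOn hne f.continuous.continuousOn
  obtain ⟨q, hq, hqmax⟩ := hcomp.exists_isMaxOn hne f.continuous.continuousOn
  filter_upwards [(toFinite {f p, f q}).countable.ae_notMem volume] with c hc
  rcases eq_empty_or_nonempty (frontier K ∩ f ⁻¹' {c}) with h | ⟨x, hxK, rfl⟩
  · simp [h]
  simp only [mem_insert_iff, mem_singleton_iff, not_or] at hc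
  have hxK' := hclosed.frontier_subset hxK
  obtain ⟨z, hz, hzx⟩ := exists_mem_interior_eq hK hint f.continuous hp hq
    ((hpmin hxK').lt_of_ne' hc.1) ((hqmax hxK').lt_of_ne hc.2)
  exact hzx ▸ encard_frontier_inter_level_le_two hdim hK hf hz

end ConvexBoundary

lemma edist_le_sum_edist_apply {ι : Type*} [Fintype ι] (x y : EuclideanSpace ℝ ι) :
    edist x y ≤ ∑ i, edist (x i) (y i) := by
  classical
  have h (x : EuclideanSpace ℝ ι) : ‖x‖ ≤ ∑ i, ‖x i‖ := by
    calc ‖x‖ = ‖∑ i, x i • EuclideanSpace.basisFun ι ℝ i‖ :=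
          congrArg norm ((EuclideanSpace.basisFun ι ℝ).sum_repr x).symm
      _ ≤ ∑ i, ‖x i‖ := (norm_sum_le _ _).trans_eq (by simp [norm_smul])
  simp only [edist_dist, dist_eq_norm]
  rw [← ENNReal.ofReal_sum_of_nonneg fun _ _ => norm_nonneg _]
  exact ENNReal.ofReal_le_ofReal (h (x - y))

lemma eVariationOn_le_sum_apply {ι : Type*} [Fintype ι] (γ : ℝ → EuclideanSpace ℝ ι) (s : Set ℝ) :
    eVariationOn γ s ≤ ∑ i, eVariationOn (fun t => γ t i) s := by
  refine iSup_le fun ⟨n, u, hu, hus⟩ => ?_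
  calc ∑ k ∈ Finset.range n, edist (γ (u (k + 1))) (γ (u k))
      ≤ ∑ k ∈ Finset.range n, ∑ i, edist (γ (u (k + 1)) i) (γ (u k) i) :=
        Finset.sum_le_sum fun k _ => edist_le_sum_edist_apply _ _
    _ = ∑ i, ∑ k ∈ Finset.range n, edist (γ (u (k + 1)) i) (γ (u k) i) := Finset.sum_comm
    _ ≤ ∑ i, eVariationOn (fun t => γ t i) s :=
        Finset.sum_le_sum fun i _ => eVariationOn.sum_le hu hus

lemma encard_Icc_inter_preimage_le {X : Type*} {γ : ℝ → X} {a b : ℝ}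
    (hγ : InjOn γ (Ico a b)) (S : Set X) :
    (Icc a b ∩ γ ⁻¹' S).encard ≤ (S ∩ γ '' Icc a b).encard + 1 := by
  have hsub : Icc a b ∩ γ ⁻¹' S ⊆ insert b (Ico a b ∩ γ ⁻¹' S) := fun t ⟨ht, htS⟩ =>
    ht.2.eq_or_lt.imp id fun h => ⟨⟨ht.1, h⟩, htS⟩
  refine (encard_le_encard hsub).trans <| (encard_insert_le _ _).trans <| add_le_add_left ?_ 1
  exact encard_le_encard_of_injOn
    (fun t ht => ⟨ht.2, mem_image_of_mem γ (Ico_subset_Icc_self ht.1)⟩)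
    (hγ.mono inter_subset_left)

lemma eVariationOn_frontier_ne_top {K : Set (EuclideanSpace ℝ (Fin 2))} (hcomp : IsCompact K)
    (hconv : Convex ℝ K) (hint : (interior K).Nonempty) {γ : ℝ → EuclideanSpace ℝ (Fin 2)}
    (hγcont : ContinuousOn γ (Icc 0 1)) (hγinj : InjOn γ (Ico 0 1))
    (hγimg : γ '' Icc 0 1 = frontier K) : eVariationOn γ (Icc 0 1) ≠ ⊤ := by
  refine ne_top_of_le_ne_top (ENNReal.sum_ne_top.2 fun i _ => ?_) (eVariationOn_le_sum_apply γ _)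
  let f : StrongDual ℝ (EuclideanSpace ℝ (Fin 2)) := EuclideanSpace.proj i
  have hf : f ≠ 0 := fun h => by
    simpa [f] using DFunLike.congr_fun h (EuclideanSpace.single i 1)
  have hfibers : ∀ᵐ c, (Icc (0 : ℝ) 1 ∩ (fun t => γ t i) ⁻¹' {c}).encard ≤ (3 : ℕ) := by
    filter_upwards [ae_encard_frontier_inter_level_le_two (finrank_euclideanSpace_fin) hconv hcomp
      hcomp.isClosed hint hf] with c hc
    refine (encard_Icc_inter_preimage_le hγinj (f ⁻¹' {c})).trans ?_
    rw [hγimg, inter_comm]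
    exact (add_le_add_left hc 1).trans_eq (by norm_num)
  have hcoord : ContinuousOn (fun t => γ t i) (Icc 0 1) := f.continuous.comp_continuousOn hγcont
  exact ne_top_of_le_ne_top (ENNReal.mul_ne_top (ENNReal.natCast_ne_top 3)
    (isCompact_Icc.image_of_continuousOn hcoord).measure_lt_top.ne)
    (eVariationOn_le_mul_volume_image hcoord hfibers)

/-! ### Support functions -/

section SupportFunction

variable {E : Type*} [NormedAddCommGroup E] [InnerProductSpace ℝ E] {K : Set E}

/-- The support function of `K`, defined for all vectors `v`, not only for unit normals; it is
meaningful for nonempty bounded `K`. -/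
def supportFun (K : Set E) (v : E) : ℝ := sSup ((fun x => ⟪v, x⟫) '' K)

lemma inner_le_supportFun (hK : IsCompact K) (v : E) {x : E} (hx : x ∈ K) :
    ⟪v, x⟫ ≤ supportFun K v :=
  le_csSup (hK.image (by fun_prop)).bddAbove (mem_image_of_mem _ hx)

lemma exists_inner_eq_supportFun (hK : IsCompact K) (hne : K.Nonempty) (v : E) :
    ∃ x ∈ K, ⟪v, x⟫ = supportFun K v :=
  (hK.image (f := fun x => ⟪v, x⟫) (by fun_prop)).sSup_mem (hne.image _)

lemma supportFun_le (hne : K.Nonempty) {v : E} {a : ℝ} (h : ∀ x ∈ K, ⟪v, x⟫ ≤ a) :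
    supportFun K v ≤ a :=
  csSup_le (hne.image _) (forall_mem_image.2 h)

lemma supportFun_le_add_norm_sub (hK : IsCompact K) (hne : K.Nonempty) {D : ℝ}
    (hD : ∀ x ∈ K, ‖x‖ ≤ D) (u v : E) : supportFun K u ≤ supportFun K v + D * ‖u - v‖ :=
  supportFun_le hne fun x hx => calc
    ⟪u, x⟫ = ⟪v, x⟫ + ⟪u - v, x⟫ := by rw [inner_sub_left]; ring
    _ ≤ supportFun K v + ‖u - v‖ * ‖x‖ :=
      add_le_add (inner_le_supportFun hK v hx) (real_inner_le_norm _ _)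
    _ ≤ supportFun K v + D * ‖u - v‖ := by
      rw [mul_comm D]; gcongr; exact hD x hx

lemma inner_add_mul_norm_le_supportFun (hK : IsCompact K) {c : E} {ρ : ℝ}
    (hρ : 0 ≤ ρ) (h : Metric.closedBall c ρ ⊆ K) (v : E) :
    ⟪v, c⟫ + ρ * ‖v‖ ≤ supportFun K v := by
  rcases eq_or_ne v 0 with rfl | hv
  · simpa using inner_le_supportFun hK 0 (h (Metric.mem_closedBall_self hρ))
  have hmem : c + (ρ / ‖v‖) • v ∈ Metric.closedBall c ρ := by
    simp [norm_smul, abs_of_nonneg hρ, hv]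
  calc ⟪v, c⟫ + ρ * ‖v‖ = ⟪v, c + (ρ / ‖v‖) • v⟫ := by
        rw [inner_add_right, inner_smul_right, real_inner_self_eq_norm_sq]
        field_simp
    _ ≤ supportFun K v := inner_le_supportFun hK v (h hmem)

lemma inner_lt_supportFun_of_mem_interior (hK : IsCompact K) {z : E} (hz : z ∈ interior K)
    {v : E} (hv : v ≠ 0) : ⟪v, z⟫ < supportFun K v := by
  obtain ⟨ρ, hρ, hball⟩ := Metric.nhds_basis_closedBall.mem_iff.1 (mem_interior_iff_mem_nhds.1 hz)
  have := inner_add_mul_norm_le_supportFun hK hρ.le hball v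
  have := mul_pos hρ (norm_pos_iff.2 hv)
  linarith

lemma exists_mem_frontier_inner_eq_supportFun (hK : IsCompact K) (hne : K.Nonempty) {v : E}
    (hv : v ≠ 0) : ∃ x ∈ frontier K, ⟪v, x⟫ = supportFun K v := by
  obtain ⟨x, hx, hxv⟩ := exists_inner_eq_supportFun hK hne v
  exact ⟨x, ⟨subset_closure hx, fun hxi =>
    (inner_lt_supportFun_of_mem_interior hK hxi hv).ne hxv⟩, hxv⟩

lemma closedBall_subset_of_le_supportFun [CompleteSpace E] (hK : IsCompact K) (hconv : Convex ℝ K)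
    (hne : K.Nonempty) {c : E} {ρ : ℝ}
    (h : ∀ v, ‖v‖ = 1 → ⟪v, c⟫ + ρ ≤ supportFun K v) : Metric.closedBall c ρ ⊆ K := by
  intro x hx
  by_contra hxK
  obtain ⟨f, a, hfK, hfx⟩ := geometric_hahn_banach_closed_point hconv hK.isClosed hxK
  obtain ⟨w, rfl⟩ := (InnerProductSpace.toDual ℝ E).surjective f
  simp only [InnerProductSpace.toDual_apply_apply] at hfK hfx
  have hw : 0 < ‖w‖ := norm_pos_iff.2 fun hw => by
    obtain ⟨y, hy⟩ := hne
    have := (hfK y hy).trans hfx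
    simp [hw] at this
  have hunit : ‖‖w‖⁻¹ • w‖ = 1 := by simp [norm_smul, hw.ne']
  have hsupp : supportFun K (‖w‖⁻¹ • w) ≤ ‖w‖⁻¹ * a := supportFun_le hne fun y hy => by
    rw [real_inner_smul_left]
    exact mul_le_mul_of_nonneg_left (hfK y hy).le (inv_nonneg.2 hw.le)
  have hcx : ⟪‖w‖⁻¹ • w, x - c⟫ ≤ ρ := by
    have := real_inner_le_norm (‖w‖⁻¹ • w) (x - c)
    rw [hunit, one_mul] at this
    exact this.trans (mem_closedBall_iff_norm.1 hx)
  have hax : ‖w‖⁻¹ * a < ⟪‖w‖⁻¹ • w, x⟫ := by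
    rw [real_inner_smul_left]
    exact mul_lt_mul_of_pos_left hfx (inv_pos.2 hw)
  have := h _ hunit
  rw [inner_sub_right] at hcx
  linarith

end SupportFunction

/-! ### Directions in the plane -/

/-- The unit vector of the plane with polar angle `θ`. -/
def dir (θ : ℝ) : EuclideanSpace ℝ (Fin 2) := !₂[cos θ, sin θ]

lemma inner_dir_left (θ : ℝ) (x : EuclideanSpace ℝ (Fin 2)) :
    ⟪dir θ, x⟫ = cos θ * x 0 + sin θ * x 1 := by
  simp [dir, PiLp.inner_apply, mul_comm]

lemma inner_dir_dir (θ φ : ℝ) : ⟪dir θ, dir φ⟫ = cos (θ - φ) := by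
  rw [inner_dir_left, cos_sub]
  simp [dir]

@[simp] lemma norm_dir (θ : ℝ) : ‖dir θ‖ = 1 := by
  rw [norm_eq_sqrt_real_inner, inner_dir_dir, sub_self, cos_zero, sqrt_one]

lemma dir_add_pi (θ : ℝ) : dir (θ + π) = -dir θ := by
  ext i; fin_cases i <;> simp [dir]

lemma dir_add_int_mul_two_pi (θ : ℝ) (n : ℤ) : dir (θ + n * (2 * π)) = dir θ := by
  simp only [dir, cos_add_int_mul_two_pi, sin_add_int_mul_two_pi]

lemma dir_add_add_dir_sub (θ δ : ℝ) : dir (θ + δ) + dir (θ - δ) = (2 * cos δ) • dir θ := by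
  ext i
  fin_cases i
  · simp only [dir, cos_add, cos_sub, Fin.zero_eta, PiLp.add_apply, PiLp.smul_apply,
      Matrix.cons_val_zero, smul_eq_mul]
    ring
  · simp only [dir, sin_add, sin_sub, Fin.mk_one, PiLp.add_apply, PiLp.smul_apply,
      Matrix.cons_val_one, Matrix.cons_val_fin_one, smul_eq_mul]
    ring

lemma exists_eq_norm_smul_dir (x : EuclideanSpace ℝ (Fin 2)) : ∃ φ, x = ‖x‖ • dir φ := by
  let z : ℂ := ⟨x 0, x 1⟩
  have hz : ‖z‖ = ‖x‖ := by
    rw [Complex.norm_def, Complex.normSq_mk, EuclideanSpace.norm_eq]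
    simp [Fin.sum_univ_two, sq]
  refine ⟨z.arg, ?_⟩
  ext i
  fin_cases i
  · simpa [dir, hz] using (Complex.norm_mul_cos_arg z).symm
  · simpa [dir, hz] using (Complex.norm_mul_sin_arg z).symm

lemma norm_dir_sub_dir_le (θ φ : ℝ) : ‖dir θ - dir φ‖ ≤ |θ - φ| := by
  refine (sq_le_sq₀ (norm_nonneg _) (abs_nonneg _)).1 ?_
  rw [norm_sub_sq_real, inner_dir_dir, norm_dir, norm_dir, sq_abs]
  linarith [one_sub_sq_div_two_le_cos (x := θ - φ)]

/-! ### Equally spaced directions -/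

section Grid

variable (M : ℕ)

/-- The `2 * M` directions of the plane whose polar angles are the multiples of `π / M`, indexed
cyclically. -/
def gridDir (k : ZMod (2 * M)) : EuclideanSpace ℝ (Fin 2) := dir (k.val * (π / M))

@[simp] lemma norm_gridDir (k : ZMod (2 * M)) : ‖gridDir M k‖ = 1 := norm_dir _

lemma gridDir_ne_zero (k : ZMod (2 * M)) : gridDir M k ≠ 0 :=
  norm_ne_zero_iff.1 (by simp)

variable [NeZero M]

lemma gridDir_intCast (j : ℤ) : gridDir M j = dir (j * (π / M)) := by
  have hval : ((j : ZMod (2 * M)).val : ℝ) = j - (2 * M : ℕ) * (j / (2 * M : ℕ) : ℤ) := by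
    rw [← Int.cast_natCast, ZMod.val_intCast, Int.emod_def]
    push_cast; ring
  rw [gridDir, hval, ← dir_add_int_mul_two_pi _ (j / (2 * M : ℕ))]
  congr 1
  have : (M : ℝ) ≠ 0 := NeZero.ne _
  push_cast
  field_simp
  ring

lemma gridDir_add_one_add_sub_one (k : ZMod (2 * M)) :
    gridDir M (k + 1) + gridDir M (k - 1) = (2 * cos (π / M)) • gridDir M k := by
  obtain ⟨j, rfl⟩ := ZMod.intCast_surjective k
  rw [← Int.cast_one, ← Int.cast_add, ← Int.cast_sub]
  simp only [gridDir_intCast]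
  rw [← dir_add_add_dir_sub]
  congr 2 <;> (push_cast; ring)

lemma gridDir_add_natCast_self (k : ZMod (2 * M)) : gridDir M (k + M) = -gridDir M k := by
  obtain ⟨j, rfl⟩ := ZMod.intCast_surjective k
  rw [← Int.cast_natCast, ← Int.cast_add, gridDir_intCast, gridDir_intCast, ← dir_add_pi]
  congr 1
  have : (M : ℝ) ≠ 0 := NeZero.ne _
  push_cast
  field_simp

lemma sum_gridDir : ∑ k, gridDir M k = 0 := by
  have h := Equiv.sum_comp (Equiv.addRight (M : ZMod (2 * M))) (gridDir M)
  simp only [Equiv.coe_addRight, gridDir_add_natCast_self, Finset.sum_neg_distrib] at h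
  have := IsAddTorsionFree.of_module_rat (EuclideanSpace ℝ (Fin 2))
  exact self_eq_neg.1 h.symm

lemma sum_inner_gridDir (x : EuclideanSpace ℝ (Fin 2)) : ∑ k, ⟪gridDir M k, x⟫ = 0 := by
  rw [← sum_inner, sum_gridDir, inner_zero_left]

lemma exists_gridDir_eq_dir_near (φ : ℝ) :
    ∃ k θ, gridDir M k = dir θ ∧ |θ - φ| ≤ π / (2 * M) := by
  have hM : (0 : ℝ) < M := Nat.cast_pos.2 (NeZero.pos M)
  have hδ : 0 < π / M := div_pos pi_pos hM
  refine ⟨_, _, gridDir_intCast M (round (φ / (π / M))), ?_⟩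
  calc |round (φ / (π / M)) * (π / M) - φ|
      = |φ / (π / M) - round (φ / (π / M))| * (π / M) := by
        rw [abs_sub_comm, ← abs_of_pos hδ, ← abs_mul, abs_of_pos hδ, sub_mul,
          div_mul_cancel₀ _ hδ.ne']
    _ ≤ 1 / 2 * (π / M) := mul_le_mul_of_nonneg_right (abs_sub_round _) hδ.le
    _ = π / (2 * M) := by ring

lemma pi_div_two_mul_le_pi_div_two : π / (2 * M) ≤ π / 2 := by
  have : (1 : ℝ) ≤ M := Nat.one_le_cast.2 (NeZero.pos M)
  exact div_le_div_of_nonneg_left pi_pos.le two_pos (by linarith)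

lemma exists_cos_mul_norm_le_inner_gridDir (x : EuclideanSpace ℝ (Fin 2)) :
    ∃ k, cos (π / (2 * M)) * ‖x‖ ≤ ⟪gridDir M k, x⟫ := by
  obtain ⟨φ, hφ⟩ := exists_eq_norm_smul_dir x
  obtain ⟨k, θ, hk, hθ⟩ := exists_gridDir_eq_dir_near M φ
  refine ⟨k, ?_⟩
  have hcos : cos (π / (2 * M)) ≤ cos (θ - φ) := by
    rw [← cos_abs (θ - φ)]
    exact cos_le_cos_of_nonneg_of_le_pi (abs_nonneg _)
      ((pi_div_two_mul_le_pi_div_two M).trans (by linarith [pi_pos])) hθ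
  calc cos (π / (2 * M)) * ‖x‖ ≤ cos (θ - φ) * ‖x‖ := by gcongr
    _ = ⟪gridDir M k, x⟫ := by
      conv_rhs => rw [hφ, hk, real_inner_smul_right, inner_dir_dir, mul_comm]

lemma exists_norm_sub_gridDir_le {v : EuclideanSpace ℝ (Fin 2)} (hv : ‖v‖ = 1) :
    ∃ k, ‖gridDir M k - v‖ ≤ π / (2 * M) := by
  obtain ⟨φ, hφ⟩ := exists_eq_norm_smul_dir v
  obtain ⟨k, θ, hk, hθ⟩ := exists_gridDir_eq_dir_near M φ
  rw [hv, one_smul] at hφ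
  exact ⟨k, hk ▸ hφ ▸ (norm_dir_sub_dir_le θ φ).trans hθ⟩

/- The half-plane is centred on the angular midpoint of the window. -/
lemma exists_halfPlane_inter_grid_subset_window (a : ZMod (2 * M)) :
    ∃ v, ∀ k, 0 ≤ ⟪gridDir M k, v⟫ → ∃ i < M, k = a + (i : ℕ) := by
  obtain ⟨j, rfl⟩ := ZMod.intCast_surjective a
  refine ⟨dir ((j + (M - 1) / 2) * (π / M)), fun k hk => ⟨(k - j).val, ?_, by simp⟩⟩
  have hk_eq : k = ((j + (k - j).val : ℤ) : ZMod (2 * M)) := by simp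
  set i := (k - j).val
  have hiM : (i : ℝ) + 1 ≤ 2 * M := by exact_mod_cast ZMod.val_lt (k - (j : ZMod (2 * M)))
  rw [hk_eq, gridDir_intCast, inner_dir_dir] at hk
  by_contra! hi
  have hi : (M : ℝ) ≤ i := Nat.cast_le.2 hi
  have hM : (0 : ℝ) < M := Nat.cast_pos.2 (NeZero.pos M)
  refine hk.not_gt (cos_neg_of_pi_div_two_lt_of_lt ?_ ?_)
  all_goals
    push_cast
    rw [← sub_pos]
    field_simp
    nlinarith [pi_pos]

end Grid

/-! ### A discrete Cauchy formula for the length of a closed curve -/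

lemma integral_abs_cos : ∫ x in (0 : ℝ)..2 * π, |cos x| = 4 := by
  have hint (a b : ℝ) : IntervalIntegrable (fun x => |cos x|) volume a b :=
    (continuous_cos.abs).intervalIntegrable a b
  have hper : Function.Periodic (fun x => |cos x|) π := fun x => by simp
  have hhalf : ∫ x in (-(π / 2))..(-(π / 2) + π), |cos x| = 2 := by
    have hcos : EqOn (fun x => |cos x|) cos (uIcc (-(π / 2)) (π / 2)) := fun x hx => by
      rw [uIcc_of_le (by linarith [pi_pos])] at hx
      exact abs_of_nonneg (cos_nonneg_of_mem_Icc hx)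
    rw [show -(π / 2) + π = π / 2 by ring, intervalIntegral.integral_congr hcos, integral_cos,
      sin_neg, sin_pi_div_two]
    norm_num
  rw [← intervalIntegral.integral_add_adjacent_intervals (hint 0 π) (hint π (2 * π)), two_mul,
    ← hper.intervalIntegral_add_eq 0 π, zero_add, ← zero_add π,
    hper.intervalIntegral_add_eq 0 (-(π / 2)), hhalf]
  norm_num

lemma two_mul_sin_mul_abs_cos_le_integral {ε : ℝ} (hε : 0 ≤ ε) (x : ℝ) :
    2 * sin ε * |cos x| ≤ ∫ y in (x - ε)..(x + ε), |cos y| := by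
  calc 2 * sin ε * |cos x| ≤ |2 * sin ε| * |cos x| := by gcongr; exact le_abs_self _
    _ = |∫ y in (x - ε)..(x + ε), cos y| := by
      rw [integral_cos, sin_add, sin_sub, ← abs_mul]; congr 1; ring
    _ ≤ ∫ y in (x - ε)..(x + ε), |cos y| :=
      intervalIntegral.abs_integral_le_integral_abs (by linarith)

lemma sin_mul_sum_abs_cos_le {n : ℕ} {ε : ℝ} (hε : 0 ≤ ε) (hn : n * ε = π) (φ : ℝ) :
    sin ε * ∑ i ∈ Finset.range n, |cos (i * (2 * ε) - φ)| ≤ 2 := by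
  let a (i : ℕ) : ℝ := i * (2 * ε) - φ - ε
  have hper : Function.Periodic (fun x => |cos x|) (2 * π) := fun x => by simp
  have hsum : ∑ i ∈ Finset.range n, 2 * sin ε * |cos (i * (2 * ε) - φ)| ≤ 4 := calc
    _ ≤ ∑ i ∈ Finset.range n, ∫ y in a i..a (i + 1), |cos y| := by
      refine Finset.sum_le_sum fun i _ => (two_mul_sin_mul_abs_cos_le_integral hε _).trans_eq ?_
      congr 1
      simp only [a]; push_cast; ring
    _ = ∫ y in a 0..a n, |cos y| := intervalIntegral.sum_integral_adjacent_intervals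
      fun i _ => continuous_cos.abs.intervalIntegrable _ _
    _ = 4 := by
      rw [show a n = a 0 + 2 * π by simp only [a]; push_cast; linear_combination 2 * hn,
        hper.intervalIntegral_add_eq (a 0) 0, zero_add, integral_abs_cos]
  rw [← Finset.mul_sum] at hsum
  linarith

lemma sum_zmod_eq_sum_range {R : Type*} [AddCommMonoid R] (n : ℕ) [NeZero n] (f : ℕ → R) :
    ∑ k : ZMod n, f k.val = ∑ i ∈ Finset.range n, f i := by
  obtain ⟨m, rfl⟩ := Nat.exists_eq_succ_of_ne_zero (NeZero.ne n)
  exact Fin.sum_univ_eq_sum_range f (m + 1)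

lemma sin_mul_sum_abs_inner_gridDir_le (M : ℕ) [NeZero M] (v : EuclideanSpace ℝ (Fin 2)) :
    sin (π / (2 * M)) * ∑ k, |⟪gridDir M k, v⟫| ≤ 2 * ‖v‖ := by
  have hM : (M : ℝ) ≠ 0 := NeZero.ne _
  obtain ⟨φ, hφ⟩ := exists_eq_norm_smul_dir v
  have hinner (k : ZMod (2 * M)) : |⟪gridDir M k, v⟫| =
      ‖v‖ * |cos (k.val * (2 * (π / (2 * M))) - φ)| := by
    conv_lhs => rw [hφ, real_inner_smul_right, gridDir, inner_dir_dir, abs_mul, abs_norm]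
    congr 4
    ring
  have hsum := sin_mul_sum_abs_cos_le (n := 2 * M) (ε := π / (2 * M)) (by positivity)
    (by push_cast; field_simp) φ
  rw [← sum_zmod_eq_sum_range (2 * M) fun i => |cos (i * (2 * (π / (2 * M))) - φ)|] at hsum
  simp only [hinner, ← Finset.mul_sum]
  nlinarith [norm_nonneg v]

lemma two_mul_abs_sub_le_sum_of_closed {y : ℕ → ℝ} {n : ℕ} (hy : y 0 = y n) {p q : ℕ}
    (hp : p ≤ n) (hq : q ≤ n) :
    2 * |y p - y q| ≤ ∑ i ∈ Finset.range n, |y (i + 1) - y i| := by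
  wlog hpq : p ≤ q generalizing p q
  · rw [abs_sub_comm]; exact this hq hp (le_of_not_ge hpq)
  have arc {i j : ℕ} (hij : i ≤ j) : |y i - y j| ≤ ∑ l ∈ Finset.Ico i j, |y (l + 1) - y l| := by
    simpa only [Real.dist_eq, abs_sub_comm] using dist_le_Ico_sum_dist y hij
  have hreturn : |y p - y q| ≤ |y 0 - y p| + |y q - y n| := by
    rw [← hy, abs_sub_comm (y 0) (y p)]
    exact (abs_sub_le _ (y 0) _).trans_eq (by rw [abs_sub_comm (y 0)])
  rw [Finset.range_eq_Ico, ← Finset.sum_Ico_consecutive _ (Nat.zero_le p) hp,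
    ← Finset.sum_Ico_consecutive _ hpq hq]
  linarith [arc (Nat.zero_le p), arc hpq, arc hq]

lemma exists_monotone_enumeration {α : Type*} [LinearOrder α] {S : Finset α} {a b : α}
    (ha : a ∈ S) (hb : b ∈ S) (hS : ∀ t ∈ S, t ∈ Icc a b) :
    ∃ (u : ℕ → α) (n : ℕ), Monotone u ∧ (∀ i, u i ∈ Icc a b) ∧ u 0 = a ∧ u n = b ∧
      ∀ t ∈ S, ∃ i ≤ n, u i = t := by
  obtain ⟨n, hn⟩ := Nat.exists_eq_add_one_of_ne_zero (Finset.card_ne_zero_of_mem ha)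
  let u (i : ℕ) : α := S.orderEmbOfFin hn ⟨min i n, by omega⟩
  have hmono : Monotone u := fun i j hij =>
    (S.orderEmbOfFin hn).monotone (Fin.mk_le_mk.2 (min_le_min_right n hij))
  have hmem (i : ℕ) : u i ∈ Icc a b := hS _ (S.orderEmbOfFin_mem hn _)
  have hsurj : ∀ t ∈ S, ∃ i ≤ n, u i = t := fun t ht => by
    obtain ⟨i, rfl⟩ : t ∈ range (S.orderEmbOfFin hn) := by rwa [Finset.range_orderEmbOfFin]
    exact ⟨i, by omega, congrArg _ (Fin.ext (min_eq_left (by omega)))⟩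
  refine ⟨u, n, hmono, hmem, ?_, ?_, hsurj⟩
  · obtain ⟨i, -, hi⟩ := hsurj a ha
    exact le_antisymm (hi ▸ hmono (Nat.zero_le i)) (hmem 0).1
  · obtain ⟨i, hin, hi⟩ := hsurj b hb
    exact le_antisymm (hmem n).2 (hi ▸ hmono hin)

/- Inscribe a polygon with vertices at all times `τ k`, `τ' k`; each of its coordinate functions
`⟪u k, ·⟫` travels from `τ' k` to `τ k` and back. -/
lemma two_mul_sum_inner_sub_le_mul_eVariationOn {E ι : Type*} [NormedAddCommGroup E]
    [InnerProductSpace ℝ E] [Fintype ι] {u : ι → E} {C : ℝ} (hC : 0 ≤ C)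
    (hu : ∀ v, ∑ k, |⟪u k, v⟫| ≤ C * ‖v‖) {γ : ℝ → E} {a b : ℝ} (hab : a ≤ b)
    (hclosed : γ a = γ b) (hfin : eVariationOn γ (Icc a b) ≠ ⊤) {τ τ' : ι → ℝ}
    (hτ : ∀ k, τ k ∈ Icc a b) (hτ' : ∀ k, τ' k ∈ Icc a b) :
    2 * ∑ k, ⟪u k, γ (τ k) - γ (τ' k)⟫ ≤ C * (eVariationOn γ (Icc a b)).toReal := by
  classical
  let S : Finset ℝ := {a, b} ∪ (Finset.univ.image τ ∪ Finset.univ.image τ')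
  obtain ⟨x, n, hx, hxab, hx0, hxn, hxS⟩ :
      ∃ (x : ℕ → ℝ) (n : ℕ), Monotone x ∧ (∀ i, x i ∈ Icc a b) ∧ x 0 = a ∧ x n = b ∧
        ∀ t ∈ S, ∃ i ≤ n, x i = t := by
    refine exists_monotone_enumeration (by simp [S]) (by simp [S]) fun t ht => ?_
    simp only [S, Finset.mem_union, Finset.mem_insert, Finset.mem_singleton, Finset.mem_image,
      Finset.mem_univ, true_and] at ht
    rcases ht with (rfl | rfl) | ⟨k, rfl⟩ | ⟨k, rfl⟩
    exacts [left_mem_Icc.2 hab, right_mem_Icc.2 hab, hτ k, hτ' k]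
  have hpolygon : ∑ i ∈ Finset.range n, ‖γ (x (i + 1)) - γ (x i)‖ ≤
      (eVariationOn γ (Icc a b)).toReal := by
    have h := ENNReal.toReal_mono hfin (eVariationOn.sum_le (n := n) hx hxab)
    rw [ENNReal.toReal_sum fun i _ => edist_ne_top _ _] at h
    simpa only [edist_dist, ENNReal.toReal_ofReal, dist_nonneg, dist_eq_norm, norm_nonneg] using h
  have hcoord (k : ι) : 2 * ⟪u k, γ (τ k) - γ (τ' k)⟫ ≤
      ∑ i ∈ Finset.range n, |⟪u k, γ (x (i + 1)) - γ (x i)⟫| := by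
    obtain ⟨p, hp, hpτ⟩ := hxS (τ k) (by simp [S])
    obtain ⟨q, hq, hqτ⟩ := hxS (τ' k) (by simp [S])
    have h := two_mul_abs_sub_le_sum_of_closed (y := fun i => ⟪u k, γ (x i)⟫)
      (by rw [hx0, hxn, hclosed]) hp hq
    simp only [← inner_sub_right, hpτ, hqτ] at h
    linarith [le_abs_self ⟪u k, γ (τ k) - γ (τ' k)⟫]
  calc 2 * ∑ k, ⟪u k, γ (τ k) - γ (τ' k)⟫
      ≤ ∑ k, ∑ i ∈ Finset.range n, |⟪u k, γ (x (i + 1)) - γ (x i)⟫| := by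
        rw [Finset.mul_sum]; exact Finset.sum_le_sum fun k _ => hcoord k
    _ = ∑ i ∈ Finset.range n, ∑ k, |⟪u k, γ (x (i + 1)) - γ (x i)⟫| := Finset.sum_comm
    _ ≤ ∑ i ∈ Finset.range n, C * ‖γ (x (i + 1)) - γ (x i)‖ :=
        Finset.sum_le_sum fun i _ => hu _
    _ ≤ C * (eVariationOn γ (Icc a b)).toReal := by
        rw [← Finset.mul_sum]; exact mul_le_mul_of_nonneg_left hpolygon hC

lemma sin_pi_div_two_mul_pos (M : ℕ) [NeZero M] : 0 < sin (π / (2 * M)) := by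
  have : (0 : ℝ) < M := Nat.cast_pos.2 (NeZero.pos M)
  exact sin_pos_of_pos_of_lt_pi (by positivity)
    ((pi_div_two_mul_le_pi_div_two M).trans_lt (by linarith [pi_pos]))

/- By antipodal symmetry of the grid, twice the sum of the support numbers is the sum of the widths
of `K`. -/
lemma two_mul_sin_mul_sum_supportFun_gridDir_le {K : Set (EuclideanSpace ℝ (Fin 2))}
    (hK : IsCompact K) (hne : K.Nonempty) {γ : ℝ → EuclideanSpace ℝ (Fin 2)}
    (hclosed : γ 0 = γ 1) (himg : γ '' Icc 0 1 = frontier K)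
    (hfin : eVariationOn γ (Icc 0 1) ≠ ⊤) (M : ℕ) [NeZero M] :
    2 * sin (π / (2 * M)) * ∑ k, supportFun K (gridDir M k) ≤
      (eVariationOn γ (Icc 0 1)).toReal := by
  have hsin := sin_pi_div_two_mul_pos M
  have hcontact (k : ZMod (2 * M)) :
      ∃ t ∈ Icc (0 : ℝ) 1, ⟪gridDir M k, γ t⟫ = supportFun K (gridDir M k) := by
    obtain ⟨x, hx, hxk⟩ := exists_mem_frontier_inner_eq_supportFun hK hne (gridDir_ne_zero M k)
    rw [← himg] at hx
    obtain ⟨t, ht, rfl⟩ := hx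
    exact ⟨t, ht, hxk⟩
  choose τ hτ hτk using hcontact
  have hwidth (k : ZMod (2 * M)) : ⟪gridDir M k, γ (τ k) - γ (τ (k + M))⟫ =
      supportFun K (gridDir M k) + supportFun K (gridDir M (k + M)) := by
    rw [inner_sub_right, hτk, ← neg_neg (gridDir M k), inner_neg_left, neg_neg,
      ← gridDir_add_natCast_self, hτk, sub_neg_eq_add]
  have hshift := Equiv.sum_comp (Equiv.addRight (M : ZMod (2 * M)))
    fun k => supportFun K (gridDir M k)
  simp only [Equiv.coe_addRight] at hshift
  have h := two_mul_sum_inner_sub_le_mul_eVariationOn (C := 2 / sin (π / (2 * M)))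
    (by positivity) (fun v => by
      rw [div_mul_eq_mul_div, le_div_iff₀' hsin]; exact sin_mul_sum_abs_inner_gridDir_le M v)
    zero_le_one hclosed hfin hτ fun k => hτ (k + M)
  simp only [hwidth, Finset.sum_add_distrib, hshift] at h
  rw [div_mul_eq_mul_div, le_div_iff₀' hsin] at h
  linarith

/-! ### A discrete Wirtinger inequality -/

/- A positive supersolution `w` of `x (σ j) + x (σ⁻¹ j) = 2 * lam * x j` on the support of `e`
bounds the quadratic form of `e` (Picone's trick): by AM-GM,
`2 * e j * e (σ j) ≤ e j ^ 2 * (w (σ j) / w j) + e (σ j) ^ 2 * (w j / w (σ j))`. -/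
lemma sum_mul_perm_le_of_supersolution {ι : Type*} [Fintype ι] (σ : Equiv.Perm ι) {e w : ι → ℝ}
    {lam : ℝ} (hw : ∀ j, 0 ≤ w j) (hpos : ∀ j, e j ≠ 0 → 0 < w j)
    (hsuper : ∀ j, e j ≠ 0 → w (σ j) + w (σ.symm j) ≤ 2 * lam * w j) :
    ∑ j, e j * e (σ j) ≤ lam * ∑ j, e j ^ 2 := by
  have amgm (j : ι) : 2 * (e j * e (σ j)) ≤
      e j ^ 2 * (w (σ j) / w j) + e (σ j) ^ 2 * (w j / w (σ j)) := by
    have hj := hw j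
    have hσj := hw (σ j)
    rcases eq_or_ne (e j) 0 with h | h
    · rw [h]; simp only [zero_mul, mul_zero]; positivity
    rcases eq_or_ne (e (σ j)) 0 with h' | h'
    · rw [h']; simp only [mul_zero]; positivity
    have hj := hpos j h
    have hσj := hpos _ h'
    rw [← sub_nonneg]
    have hsq : e j ^ 2 * (w (σ j) / w j) + e (σ j) ^ 2 * (w j / w (σ j)) - 2 * (e j * e (σ j)) =
        (e j * w (σ j) - e (σ j) * w j) ^ 2 / (w j * w (σ j)) := by
      field_simp
      ring
    rw [hsq]
    positivity
  have hreindex : ∑ j, e (σ j) ^ 2 * (w j / w (σ j)) = ∑ j, e j ^ 2 * (w (σ.symm j) / w j) := by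
    simpa using Equiv.sum_comp σ fun j => e j ^ 2 * (w (σ.symm j) / w j)
  have hterm (j : ι) :
      e j ^ 2 * (w (σ j) / w j) + e j ^ 2 * (w (σ.symm j) / w j) ≤ 2 * lam * e j ^ 2 := by
    rcases eq_or_ne (e j) 0 with h | h
    · simp [h]
    have := (div_le_iff₀ (hpos j h)).2 (hsuper j h)
    calc _ = e j ^ 2 * ((w (σ j) + w (σ.symm j)) / w j) := by ring
      _ ≤ e j ^ 2 * (2 * lam) := by gcongr
      _ = 2 * lam * e j ^ 2 := mul_comm _ _
  have hsum : 2 * ∑ j, e j * e (σ j) ≤ 2 * (lam * ∑ j, e j ^ 2) := calc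
    _ ≤ ∑ j, (e j ^ 2 * (w (σ j) / w j) + e (σ j) ^ 2 * (w j / w (σ j))) := by
      rw [Finset.mul_sum]; exact Finset.sum_le_sum fun j _ => amgm j
    _ = ∑ j, (e j ^ 2 * (w (σ j) / w j) + e j ^ 2 * (w (σ.symm j) / w j)) := by
      rw [Finset.sum_add_distrib, hreindex, Finset.sum_add_distrib]
    _ ≤ 2 * (lam * ∑ j, e j ^ 2) := by
      rw [← mul_assoc, Finset.mul_sum]; exact Finset.sum_le_sum fun j _ => hterm j
  linarith

lemma exists_steps_back_to_set {G : Type*} [AddCommGroupWithOne G] {Z : Set G} {M : ℕ}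
    (hZ : ∀ a : G, ∃ i < M, a + (i : ℕ) ∈ Z) :
    ∃ d : G → ℕ, (∀ j, d j < M) ∧ (∀ j, d j = 0 ↔ j ∈ Z) ∧ ∀ j ∉ Z, d j = d (j - 1) + 1 := by
  classical
  have hback (j : G) : ∃ n, j - (n : ℕ) ∈ Z ∧ n < M := by
    obtain ⟨i, hi, hiZ⟩ := hZ (j - (M - 1 : ℕ))
    refine ⟨M - 1 - i, ?_, by omega⟩
    rwa [Nat.cast_sub (by omega), sub_sub_eq_add_sub, add_sub_right_comm]
  have hex (j : G) : ∃ n, j - (n : ℕ) ∈ Z := (hback j).imp fun _ h => h.1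
  refine ⟨fun j => Nat.find (hex j), fun j => ?_, fun j => ?_, fun j hj => ?_⟩
  · obtain ⟨n, hn, hnM⟩ := hback j
    exact (Nat.find_min' _ hn).trans_lt hnM
  · simp
  · have hsucc (n : ℕ) : j - ((n + 1 : ℕ) : G) = j - 1 - n := by
      rw [Nat.cast_add, Nat.cast_one]; abel
    change Nat.find (hex j) = Nat.find (hex (j - 1)) + 1
    rw [Nat.find_comp_succ (hex j) (by simpa only [hsucc] using hex (j - 1)) (by simpa using hj)]
    simp only [hsucc]

/- The supersolution is `sin (n * (π / M))`, where `n` is the number of steps back to a zero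
of `e`. -/
lemma sum_mul_succ_le_cos_mul_sum_sq {M : ℕ} [NeZero M] {e : ZMod (2 * M) → ℝ}
    (he : ∀ a, ∃ i < M, e (a + (i : ℕ)) = 0) :
    ∑ j, e j * e (j + 1) ≤ cos (π / M) * ∑ j, e j ^ 2 := by
  obtain ⟨d, hdM, hd0, hd⟩ := exists_steps_back_to_set (Z := {j | e j = 0}) he
  have hM : (0 : ℝ) < M := Nat.cast_pos.2 (NeZero.pos M)
  have hle_pi {n : ℕ} (hn : n ≤ M) : n * (π / M) ≤ π := by
    rw [← mul_comm_div, mul_le_iff_le_one_left pi_pos, div_le_one hM]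
    exact Nat.cast_le.2 hn
  have hsin {n : ℕ} (hn : n ≤ M) : 0 ≤ sin (n * (π / M)) :=
    sin_nonneg_of_nonneg_of_le_pi (by positivity) (hle_pi hn)
  refine sum_mul_perm_le_of_supersolution (Equiv.addRight 1) (w := fun j => sin (d j * (π / M)))
    (fun j => hsin (hdM j).le) (fun j hj => ?_) fun j hj => ?_
  · have : (0 : ℝ) < d j := Nat.cast_pos.2 (Nat.pos_of_ne_zero fun h => hj ((hd0 j).1 h))
    have hlt : d j * (π / M) < π := by
      rw [← mul_comm_div, mul_lt_iff_lt_one_left pi_pos, div_lt_one hM]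
      exact Nat.cast_lt.2 (hdM j)
    exact sin_pos_of_pos_of_lt_pi (by positivity) hlt
  · have hnext : sin (d (j + 1) * (π / M)) ≤ sin ((d j + 1 : ℕ) * (π / M)) := by
      by_cases hj1 : e (j + 1) = 0
      · simpa [(hd0 (j + 1)).2 hj1] using hsin (hdM j)
      · rw [hd (j + 1) hj1, add_sub_cancel_right]
    simp only [Equiv.coe_addRight, Equiv.addRight_symm, ← sub_eq_add_neg]
    calc sin (d (j + 1) * (π / M)) + sin (d (j - 1) * (π / M))
        ≤ sin ((d j + 1 : ℕ) * (π / M)) + sin (d (j - 1) * (π / M)) :=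
          add_le_add_left hnext _
      _ = 2 * cos (π / M) * sin (d j * (π / M)) := by
          rw [hd j hj]
          push_cast
          rw [show (d (j - 1) : ℝ) * (π / M) = (d (j - 1) + 1) * (π / M) - π / M by ring,
            show ((d (j - 1) : ℝ) + 1 + 1) * (π / M) = (d (j - 1) + 1) * (π / M) + π / M by ring,
            sin_add, sin_sub]
          ring

/-! ### Maximal balls inscribed in a polyhedron -/

section MaximalInball

variable {ι E : Type*} [NormedAddCommGroup E] [InnerProductSpace ℝ E]

/-- The pair `(c, t)` is the centre and radius of a largest ball inscribed in the polyhedron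
`{x | ∀ i, ⟪u i, x⟫ ≤ h i}` with unit normals `u i`. The radius may be negative: applied to `-h`,
the notion describes the smallest `T = -t` and a centre `-c` with `h i ≤ ⟪u i, -c⟫ + T`. -/
structure IsMaximalInball (u : ι → E) (h : ι → ℝ) (c : E) (t : ℝ) : Prop where
  inner_add_le : ∀ i, ⟪u i, c⟫ + t ≤ h i
  le_radius : ∀ c' t', (∀ i, ⟪u i, c'⟫ + t' ≤ h i) → t' ≤ t

lemma exists_isMaximalInball [ProperSpace E] [Finite ι] [Nonempty ι] {u : ι → E} {κ : ℝ}
    (hκ : 0 < κ) (hu : ∀ x, ∃ i, κ * ‖x‖ ≤ ⟪u i, x⟫) (h : ι → ℝ) :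
    ∃ c t, IsMaximalInball u h c t := by
  have := Fintype.ofFinite ι
  let slack (x : E) : ℝ := Finset.univ.inf' Finset.univ_nonempty fun i => h i - ⟪u i, x⟫
  have slack_le (x : E) (i : ι) : slack x ≤ h i - ⟪u i, x⟫ :=
    Finset.inf'_le _ (Finset.mem_univ i)
  have hcont : Continuous slack :=
    Continuous.finset_inf'_apply _ fun i _ => by fun_prop
  have hcoercive : Tendsto slack (cocompact E) atBot := by
    refine tendsto_atBot_mono (g := slack) (f := fun x => (∑ i, |h i|) + -(κ * ‖x‖)) (fun x => ?_)
      (tendsto_atBot_add_const_left _ _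
        (tendsto_neg_atTop_atBot.comp
          ((tendsto_norm_cocompact_atTop (E := E)).const_mul_atTop hκ)))
    obtain ⟨i, hi⟩ := hu x
    have hsum : |h i| ≤ ∑ i, |h i| :=
      Finset.single_le_sum (f := fun i => |h i|) (fun _ _ => abs_nonneg _) (Finset.mem_univ i)
    linarith [slack_le x i, le_abs_self (h i)]
  obtain ⟨c, hc⟩ := hcont.exists_forall_ge hcoercive
  refine ⟨c, slack c, fun i => by linarith [slack_le c i], fun c' t' hc' => ?_⟩
  exact (Finset.le_inf' _ _ fun i _ => by linarith [hc' i]).trans (hc c')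

/- Otherwise every constraint becomes strict after moving the centre slightly in the direction `v`,
and the ball can be enlarged. -/
lemma IsMaximalInball.exists_contact [Finite ι] [Nonempty ι] {u : ι → E} {h : ι → ℝ} {c : E}
    {t : ℝ} (hmax : IsMaximalInball u h c t) (v : E) :
    ∃ i, h i = ⟪u i, c⟫ + t ∧ 0 ≤ ⟪u i, v⟫ := by
  by_contra! hno
  have hstrict : ∀ᶠ s : ℝ in 𝓝[>] 0, ∀ i, ⟪u i, c + s • v⟫ + t < h i := by
    refine eventually_all.2 fun i => ?_
    rcases (hmax.inner_add_le i).lt_or_eq with hlt | heq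
    · have hcont : Continuous fun s : ℝ => ⟪u i, c + s • v⟫ + t := by fun_prop
      exact nhdsWithin_le_nhds (hcont.continuousAt.eventually_lt_const (by simpa using hlt))
    · filter_upwards [self_mem_nhdsWithin] with s hs
      have := mul_neg_of_pos_of_neg hs (hno i heq.symm)
      rw [inner_add_right, real_inner_smul_right]
      linarith
  obtain ⟨s, hs⟩ := hstrict.exists
  obtain ⟨i₀, hi₀⟩ := Finite.exists_min fun i => h i - ⟪u i, c + s • v⟫
  have := hmax.le_radius (c + s • v) (h i₀ - ⟪u i₀, c + s • v⟫) fun i => by linarith [hi₀ i]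
  linarith [hs i₀]

end MaximalInball

/-! ### Equiangular circumscribed polygons -/

section SideLength

/-- For `h k` the distance from the origin to the line of normal `gridDir M k`, the signed length
of the `k`-th side of the polygon `{x | ∀ k, ⟪gridDir M k, x⟫ ≤ h k}`. -/
def sideLength (M : ℕ) (h : ZMod (2 * M) → ℝ) (k : ZMod (2 * M)) : ℝ :=
  (h (k + 1) + h (k - 1) - 2 * cos (π / M) * h k) / sin (π / M)

lemma sin_pi_div_natCast_nonneg (M : ℕ) : 0 ≤ sin (π / M) := by
  rcases M.eq_zero_or_pos with rfl | hM
  · simp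
  · exact sin_nonneg_of_nonneg_of_le_pi (by positivity)
      (div_le_self pi_pos.le (Nat.one_le_cast.2 hM))

variable {M : ℕ} [NeZero M] {e h : ZMod (2 * M) → ℝ}

lemma sideLength_supportFun_nonneg {K : Set (EuclideanSpace ℝ (Fin 2))} (hK : IsCompact K)
    (hne : K.Nonempty) (k : ZMod (2 * M)) :
    0 ≤ sideLength M (fun k => supportFun K (gridDir M k)) k := by
  obtain ⟨x, hx, hxk⟩ := exists_inner_eq_supportFun hK hne (gridDir M k)
  refine div_nonneg ?_ (sin_pi_div_natCast_nonneg M)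
  have := congrArg (⟪·, x⟫) (gridDir_add_one_add_sub_one M k)
  simp only [inner_add_left, real_inner_smul_left, hxk] at this
  linarith [inner_le_supportFun hK (gridDir M (k + 1)) hx,
    inner_le_supportFun hK (gridDir M (k - 1)) hx]

lemma sum_mul_sideLength (f g : ZMod (2 * M) → ℝ) :
    ∑ k, f k * sideLength M g k = (∑ k, f k * g (k + 1) + ∑ k, g k * f (k + 1) -
      2 * cos (π / M) * ∑ k, f k * g k) / sin (π / M) := by
  have hshift : ∑ k, g k * f (k + 1) = ∑ k, f k * g (k - 1) := by
    rw [← Equiv.sum_comp (Equiv.addRight 1) fun k => f k * g (k - 1)]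
    simp [mul_comm]
  rw [hshift, Finset.mul_sum, ← Finset.sum_add_distrib, ← Finset.sum_sub_distrib, Finset.sum_div]
  refine Finset.sum_congr rfl fun k _ => ?_
  rw [sideLength]
  ring

lemma sum_mul_sideLength_comm (f g : ZMod (2 * M) → ℝ) :
    ∑ k, f k * sideLength M g k = ∑ k, g k * sideLength M f k := by
  simp only [sum_mul_sideLength, add_comm, mul_comm (f _) (g _)]

lemma sideLength_eq_of_eq_add {t : ℝ} {p : EuclideanSpace ℝ (Fin 2)}
    (he : ∀ k, h k = e k + t + ⟪gridDir M k, p⟫) (k : ZMod (2 * M)) :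
    sideLength M h k = sideLength M e k + 2 * tan (π / (2 * M)) * t := by
  have hp := congrArg (⟪·, p⟫) (gridDir_add_one_add_sub_one M k)
  simp only [inner_add_left, real_inner_smul_left] at hp
  have htan : tan (π / (2 * M)) = (1 - cos (π / M)) / sin (π / M) := by
    have hsin := (sin_pi_div_two_mul_pos M).ne'
    rw [show π / M = 2 * (π / (2 * M)) by ring, cos_two_mul, cos_sq', sin_two_mul,
      tan_eq_sin_div_cos, ← mul_div_mul_left _ _ (mul_ne_zero two_ne_zero hsin)]
    ring
  simp only [sideLength, he, htan]
  rw [← mul_div_assoc, div_mul_eq_mul_div, ← add_div]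
  congr 1
  linear_combination hp

lemma sum_mul_sideLength_eq_of_eq_add {t : ℝ} {p : EuclideanSpace ℝ (Fin 2)}
    (he : ∀ k, h k = e k + t + ⟪gridDir M k, p⟫) :
    ∑ k, h k * sideLength M h k = ∑ k, e k * sideLength M e k +
      2 * tan (π / (2 * M)) * (2 * t * ∑ k, h k - 2 * M * t ^ 2) := by
  have hexpand (f : ZMod (2 * M) → ℝ) : ∑ k, f k * sideLength M h k =
      ∑ k, f k * sideLength M e k + 2 * tan (π / (2 * M)) * t * ∑ k, f k := by
    rw [Finset.mul_sum, ← Finset.sum_add_distrib]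
    refine Finset.sum_congr rfl fun k _ => ?_
    rw [sideLength_eq_of_eq_add he]
    ring
  have hsum : ∑ k, h k = ∑ k, e k + 2 * M * t := by
    simp [he, Finset.sum_add_distrib, sum_inner_gridDir]
  rw [hexpand h, sum_mul_sideLength_comm h e, hexpand e]
  linear_combination -(2 * tan (π / (2 * M)) * t * hsum)

/- The discrete Wirtinger inequality: the error term has nonpositive area. -/
lemma sum_mul_sideLength_nonpos (he : ∀ a, ∃ i < M, e (a + (i : ℕ)) = 0) :
    ∑ k, e k * sideLength M e k ≤ 0 := by
  rw [sum_mul_sideLength]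
  refine div_nonpos_of_nonpos_of_nonneg ?_ (sin_pi_div_natCast_nonneg M)
  simp only [← sq]
  linarith [sum_mul_succ_le_cos_mul_sum_sq he]

end SideLength

/-! ### Area of a circumscribed polygon -/

lemma orthonormal_dir_frame (θ : ℝ) : Orthonormal ℝ ![dir θ, dir (θ + π / 2)] := by
  simp [inner_dir_dir]

lemma measurePreserving_inner_dir (θ : ℝ) :
    MeasurePreserving fun x => (⟪dir θ, x⟫, ⟪dir (θ + π / 2), x⟫) := by
  have hframe := orthonormal_dir_frame θ
  let b := (basisOfOrthonormalOfCardEqFinrank hframe (by simp)).toOrthonormalBasis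
    (by simpa using hframe)
  have h := ((volume_preserving_finTwoArrow ℝ).comp
    (EuclideanSpace.volume_preserving_symm_measurableEquiv_toLp (Fin 2))).comp
    b.measurePreserving_repr
  have hb (x : EuclideanSpace ℝ (Fin 2)) (i : Fin 2) :
      b.repr x i = ⟪![dir θ, dir (θ + π / 2)] i, x⟫ := by
    rw [b.repr_apply_apply, Module.Basis.coe_toOrthonormalBasis,
      coe_basisOfOrthonormalOfCardEqFinrank]
  have hcoords : (fun x => (⟪dir θ, x⟫, ⟪dir (θ + π / 2), x⟫)) =
      MeasurableEquiv.finTwoArrow ∘ (MeasurableEquiv.toLp 2 (Fin 2 → ℝ)).symm ∘ b.repr :=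
    funext fun x => Prod.ext (hb x 0).symm (hb x 1).symm
  rw [hcoords]
  exact h

lemma measurableSet_triangle (h α β : ℝ) :
    MeasurableSet {z : ℝ × ℝ | z.1 ∈ Icc 0 h ∧ z.2 ∈ Icc (α * z.1) (β * z.1)} := by
  simp only [mem_Icc]
  measurability

lemma volume_triangle {h α β : ℝ} (hh : 0 ≤ h) (hαβ : α ≤ β) :
    volume {z : ℝ × ℝ | z.1 ∈ Icc 0 h ∧ z.2 ∈ Icc (α * z.1) (β * z.1)} =
      ENNReal.ofReal ((β - α) * h ^ 2 / 2) := by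
  have hslice (s : ℝ) :
      volume (Prod.mk s ⁻¹' {z : ℝ × ℝ | z.1 ∈ Icc 0 h ∧ z.2 ∈ Icc (α * z.1) (β * z.1)}) =
        (Icc 0 h).indicator (fun s => ENNReal.ofReal ((β - α) * s)) s := by
    by_cases hs : s ∈ Icc 0 h
    · simp [hs, ← sub_mul, preimage, -mem_Icc]
    · simp [hs, preimage, -mem_Icc]
  rw [Measure.volume_eq_prod, Measure.prod_apply (measurableSet_triangle h α β)]
  simp_rw [hslice]
  rw [lintegral_indicator measurableSet_Icc, ← ofReal_integral_eq_lintegral_ofReal]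
  · rw [integral_Icc_eq_integral_Ioc, ← intervalIntegral.integral_of_le hh,
      intervalIntegral.integral_const_mul, integral_id]
    ring_nf
  · exact Continuous.integrableOn_Icc (by fun_prop)
  · exact (ae_restrict_iff' measurableSet_Icc).2
      (ae_of_all _ fun s hs => mul_nonneg (sub_nonneg.2 hαβ) hs.1)

section PolygonArea

variable {M : ℕ} [NeZero M] {h : ZMod (2 * M) → ℝ}

lemma gridDir_add_one (k : ZMod (2 * M)) :
    gridDir M (k + 1) =
      cos (π / M) • gridDir M k + sin (π / M) • dir (k.val * (π / M) + π / 2) := by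
  have hk := gridDir_intCast M (k.val + 1)
  simp only [Int.cast_add, Int.cast_natCast, ZMod.natCast_zmod_val, Int.cast_one] at hk
  rw [hk, gridDir]
  ext i
  fin_cases i
  · simp only [dir, add_mul, one_mul, cos_add, cos_pi_div_two, sin_pi_div_two, Fin.zero_eta,
      PiLp.add_apply, PiLp.smul_apply, Matrix.cons_val_zero, smul_eq_mul]
    ring
  · simp only [dir, add_mul, one_mul, sin_add, cos_pi_div_two, sin_pi_div_two, Fin.mk_one,
      PiLp.add_apply, PiLp.smul_apply, Matrix.cons_val_one, Matrix.cons_val_fin_one, smul_eq_mul]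
    ring

lemma gridDir_sub_one (k : ZMod (2 * M)) :
    gridDir M (k - 1) =
      cos (π / M) • gridDir M k - sin (π / M) • dir (k.val * (π / M) + π / 2) := by
  rw [← add_right_inj (gridDir M (k + 1)), gridDir_add_one_add_sub_one, gridDir_add_one]
  module

/-- The triangle with apex `0` over the `k`-th side of the polygon
`{x | ∀ k, ⟪gridDir M k, x⟫ ≤ h k}`, each leg being cut out by equality of the ratios
`⟪gridDir M j, x⟫ / h j` for two consecutive `j`. -/
def sideTriangle (M : ℕ) (h : ZMod (2 * M) → ℝ) (k : ZMod (2 * M)) :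
    Set (EuclideanSpace ℝ (Fin 2)) :=
  {x | ⟪gridDir M k, x⟫ ∈ Icc 0 (h k) ∧
    ⟪gridDir M (k - 1), x⟫ * h k ≤ ⟪gridDir M k, x⟫ * h (k - 1) ∧
    ⟪gridDir M (k + 1), x⟫ * h k ≤ ⟪gridDir M k, x⟫ * h (k + 1)}

lemma sideTriangle_eq_preimage (hM : 0 < sin (π / M)) {k : ZMod (2 * M)} (hk : 0 < h k) :
    sideTriangle M h k =
      (fun x => (⟪dir (k.val * (π / M)), x⟫, ⟪dir (k.val * (π / M) + π / 2), x⟫)) ⁻¹'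
        {z : ℝ × ℝ | z.1 ∈ Icc 0 (h k) ∧
          z.2 ∈ Icc ((cos (π / M) * h k - h (k - 1)) / (sin (π / M) * h k) * z.1)
            ((h (k + 1) - cos (π / M) * h k) / (sin (π / M) * h k) * z.1)} := by
  ext x
  have hsh : 0 < sin (π / M) * h k := mul_pos hM hk
  refine and_congr_right fun _ => and_congr ?_ ?_ <;> dsimp only
  · rw [gridDir_sub_one, inner_sub_left, real_inner_smul_left, real_inner_smul_left,
      div_mul_eq_mul_div, div_le_iff₀ hsh, gridDir]
    constructor <;> intro <;> linarith
  · rw [gridDir_add_one, inner_add_left, real_inner_smul_left, real_inner_smul_left,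
      div_mul_eq_mul_div, le_div_iff₀ hsh, gridDir]
    constructor <;> intro <;> linarith

lemma volume_sideTriangle (hM : 0 < sin (π / M)) {k : ZMod (2 * M)} (hk : 0 < h k)
    (hside : 0 ≤ sideLength M h k) :
    volume (sideTriangle M h k) = ENNReal.ofReal (h k * sideLength M h k / 2) := by
  have hlength : ((h (k + 1) - cos (π / M) * h k) / (sin (π / M) * h k) -
      (cos (π / M) * h k - h (k - 1)) / (sin (π / M) * h k)) * h k = sideLength M h k := by
    rw [sideLength, ← sub_div, mul_comm (sin _), div_mul_eq_mul_div, mul_comm _ (h k),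
      mul_div_mul_left _ _ hk.ne']
    ring
  have hslopes := sub_nonneg.1 (nonneg_of_mul_nonneg_left (hlength ▸ hside) hk)
  rw [sideTriangle_eq_preimage hM hk, (measurePreserving_inner_dir _).measure_preimage
    (measurableSet_triangle _ _ _).nullMeasurableSet, volume_triangle hk.le hslopes, ← hlength]
  ring_nf

/- The triangle containing `x` is the one for which `⟪gridDir M k, x⟫ / h k` is maximal. -/
lemma exists_mem_sideTriangle (hpos : ∀ k, 0 < h k) {x : EuclideanSpace ℝ (Fin 2)}
    (hx : ∀ k, ⟪gridDir M k, x⟫ ≤ h k) : ∃ k, x ∈ sideTriangle M h k := by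
  obtain ⟨k, hk⟩ := Finite.exists_max fun k => ⟪gridDir M k, x⟫ / h k
  have hratio (j) : ⟪gridDir M j, x⟫ * h k ≤ ⟪gridDir M k, x⟫ * h j :=
    (div_le_div_iff₀ (hpos j) (hpos k)).1 (hk j)
  obtain ⟨j, hj⟩ := exists_cos_mul_norm_le_inner_gridDir M x
  have hj0 : 0 ≤ ⟪gridDir M j, x⟫ := by
    refine le_trans (mul_nonneg (cos_nonneg_of_neg_pi_div_two_le_of_le ?_ ?_) (norm_nonneg x)) hj
    · exact (neg_nonpos.2 (by positivity)).trans (by positivity)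
    · exact pi_div_two_mul_le_pi_div_two M
  have hk0 : 0 ≤ ⟪gridDir M k, x⟫ :=
    nonneg_of_mul_nonneg_left ((mul_nonneg hj0 (hpos k).le).trans (hratio j)) (hpos j)
  exact ⟨k, ⟨hk0, hx k⟩, hratio _, hratio _⟩

lemma volume_toReal_le_sum_mul_sideLength {K : Set (EuclideanSpace ℝ (Fin 2))}
    (hM : 0 < sin (π / M)) (hpos : ∀ k, 0 < h k) (hside : ∀ k, 0 ≤ sideLength M h k)
    (hK : ∀ x ∈ K, ∀ k, ⟪gridDir M k, x⟫ ≤ h k) :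
    (volume K).toReal ≤ (∑ k, h k * sideLength M h k) / 2 := by
  have hnonneg (k) : 0 ≤ h k * sideLength M h k / 2 := by
    have := hpos k; have := hside k; positivity
  rw [Finset.sum_div]
  refine ENNReal.toReal_le_of_le_ofReal (Finset.sum_nonneg fun k _ => hnonneg k) ?_
  calc volume K ≤ volume (⋃ k, sideTriangle M h k) :=
        measure_mono fun x hx => mem_iUnion.2 (exists_mem_sideTriangle hpos (hK x hx))
    _ ≤ ∑ k, volume (sideTriangle M h k) := measure_iUnion_fintype_le _ _
    _ = ENNReal.ofReal (∑ k, h k * sideLength M h k / 2) := by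
        rw [ENNReal.ofReal_sum_of_nonneg fun k _ => hnonneg k]
        exact Finset.sum_congr rfl fun k _ => volume_sideTriangle hM (hpos k) (hside k)

end PolygonArea

/-! ### The discrete Bonnesen inequality -/

section DiscreteBonnesen

variable {M : ℕ}

lemma sin_pi_div_natCast_pos (hM : 2 ≤ M) : 0 < sin (π / M) :=
  sin_pos_of_pos_of_lt_pi (div_pos pi_pos (by positivity))
    (div_lt_self pi_pos (Nat.one_lt_cast.2 hM))

lemma pi_div_two_mul_le_pi_div_three (hM : 2 ≤ M) : π / (2 * M) ≤ π / 3 := by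
  have : (2 : ℝ) ≤ M := Nat.ofNat_le_cast.2 hM
  exact div_le_div_of_nonneg_left pi_pos.le three_pos (by linarith)

lemma half_le_cos_pi_div_two_mul (hM : 2 ≤ M) : 1 / 2 ≤ cos (π / (2 * M)) := by
  rw [← cos_pi_div_three]
  exact cos_le_cos_of_nonneg_of_le_pi (by positivity) (by linarith [pi_pos])
    (pi_div_two_mul_le_pi_div_three hM)

variable [NeZero M] {K : Set (EuclideanSpace ℝ (Fin 2))}

/- The side lengths are those of a translate of `K` that contains the origin in its interior. -/
lemma volume_toReal_le_sum_supportFun_mul_sideLength (hK : IsCompact K)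
    (hint : (interior K).Nonempty) (hM : 2 ≤ M) :
    (volume K).toReal ≤ (∑ k, supportFun K (gridDir M k) *
      sideLength M (fun k => supportFun K (gridDir M k)) k) / 2 := by
  obtain ⟨o, ho⟩ := hint
  have hne : K.Nonempty := ⟨o, interior_subset ho⟩
  let e (k : ZMod (2 * M)) : ℝ := supportFun K (gridDir M k) - ⟪gridDir M k, o⟫
  have he (k) : supportFun K (gridDir M k) = e k + 0 + ⟪gridDir M k, o⟫ := by simp [e]
  have hside (k) : 0 ≤ sideLength M e k := by
    simpa [sideLength_eq_of_eq_add he] using sideLength_supportFun_nonneg hK hne k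
  have hpos (k) : 0 < e k :=
    sub_pos.2 (inner_lt_supportFun_of_mem_interior hK ho (gridDir_ne_zero M k))
  have hsub : ∀ x ∈ (· + o) ⁻¹' K, ∀ k, ⟪gridDir M k, x⟫ ≤ e k := fun x hx k => by
    have := inner_le_supportFun hK (gridDir M k) hx
    rw [inner_add_right] at this
    exact le_sub_iff_add_le.2 this
  calc (volume K).toReal = (volume ((· + o) ⁻¹' K)).toReal := by rw [measure_preimage_add_right]
    _ ≤ (∑ k, e k * sideLength M e k) / 2 :=
      volume_toReal_le_sum_mul_sideLength (sin_pi_div_natCast_pos hM) hpos hside hsub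
    _ = _ := by rw [sum_mul_sideLength_eq_of_eq_add he]; simp

lemma volume_toReal_le_mul_div_cos_sub_pi_mul_sq (hK : IsCompact K)
    (hint : (interior K).Nonempty) (hM : 2 ≤ M) {L : ℝ}
    (hL : 2 * sin (π / (2 * M)) * ∑ k, supportFun K (gridDir M k) ≤ L)
    {t : ℝ} {p : EuclideanSpace ℝ (Fin 2)} (ht : 0 ≤ t)
    (hcontact : ∀ a : ZMod (2 * M), ∃ i < M,
      supportFun K (gridDir M (a + (i : ℕ))) = ⟪gridDir M (a + (i : ℕ)), p⟫ + t) :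
    (volume K).toReal ≤ t * L / cos (π / (2 * M)) - π * t ^ 2 := by
  set α := π / (2 * M) with hα
  set S := ∑ k, supportFun K (gridDir M k)
  let e (k : ZMod (2 * M)) : ℝ := supportFun K (gridDir M k) - ⟪gridDir M k, p⟫ - t
  have hdecomp (k) : supportFun K (gridDir M k) = e k + t + ⟪gridDir M k, p⟫ := by simp [e]
  have he (a : ZMod (2 * M)) : ∃ i < M, e (a + (i : ℕ)) = 0 :=
    (hcontact a).imp fun i hi => ⟨hi.1, by simp [e, hi.2]⟩
  have hcos : 0 < cos α := by linarith [half_le_cos_pi_div_two_mul hM]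
  have harc : π ≤ 2 * M * tan α := by
    have hM0 : (0 : ℝ) < 2 * M := by positivity
    have hα2 : α < π / 2 := by linarith [pi_div_two_mul_le_pi_div_three hM, pi_pos]
    calc π = 2 * M * α := by rw [hα, mul_div_cancel₀ _ hM0.ne']
      _ ≤ 2 * M * tan α := mul_le_mul_of_nonneg_left (le_tan (by positivity) hα2) hM0.le
  calc (volume K).toReal
      ≤ (∑ k, supportFun K (gridDir M k) *
          sideLength M (fun k => supportFun K (gridDir M k)) k) / 2 :=
        volume_toReal_le_sum_supportFun_mul_sideLength hK hint hM
    _ ≤ tan α * (2 * t * S - 2 * M * t ^ 2) := by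
        rw [sum_mul_sideLength_eq_of_eq_add hdecomp]
        linarith [sum_mul_sideLength_nonpos he]
    _ = t * (2 * sin α * S) / cos α - 2 * M * tan α * t ^ 2 := by
        rw [tan_eq_sin_div_cos]; ring
    _ ≤ t * L / cos α - π * t ^ 2 := by gcongr

end DiscreteBonnesen

/-! ### Inradius and circumradius -/

lemma le_of_closedBall_subset_closedBall {E : Type*} [NormedAddCommGroup E] [NormedSpace ℝ E]
    [Nontrivial E] {c c' : E} {ρ ρ' : ℝ} (hρ : 0 ≤ ρ) (hρ' : 0 ≤ ρ')
    (h : Metric.closedBall c ρ ⊆ Metric.closedBall c' ρ') : ρ ≤ ρ' := by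
  have := Metric.diam_mono h Metric.isBounded_closedBall
  rw [Metric.diam_closedBall_eq _ hρ, Metric.diam_closedBall_eq _ hρ'] at this
  linarith

section Radii

variable {K : Set (EuclideanSpace ℝ (Fin 2))} {c : EuclideanSpace ℝ (Fin 2)} {ρ : ℝ}

lemma circumradius_le (hρ : 0 ≤ ρ) (h : K ⊆ Metric.closedBall c ρ) : circumradius K ≤ ρ :=
  csInf_le ⟨0, fun _ hρ => hρ.1⟩ ⟨hρ, c, h⟩

lemma le_circumradius (hK : IsCompact K)
    (h : ∀ c ρ', 0 ≤ ρ' → K ⊆ Metric.closedBall c ρ' → ρ ≤ ρ') : ρ ≤ circumradius K := by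
  obtain ⟨D, hD, hKD⟩ := hK.isBounded.subset_closedBall_lt 0 0
  exact le_csInf ⟨D, hD.le, 0, hKD⟩ fun ρ' ⟨hρ', c, hc⟩ => h c ρ' hρ' hc

lemma inradius_le (hρ : 0 ≤ ρ) (h : ∀ c ρ', 0 ≤ ρ' → Metric.closedBall c ρ' ⊆ K → ρ' ≤ ρ) :
    inradius K ≤ ρ :=
  Real.sSup_le (fun ρ' ⟨hρ', c, hc⟩ => h c ρ' hρ' hc) hρ

lemma inradius_nonneg (K : Set (EuclideanSpace ℝ (Fin 2))) : 0 ≤ inradius K :=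
  Real.sSup_nonneg fun _ hρ => hρ.1

lemma le_inradius (hK : IsCompact K) (h : Metric.closedBall c ρ ⊆ K) : ρ ≤ inradius K := by
  obtain hρ | hρ := lt_or_ge ρ 0
  · exact hρ.le.trans (inradius_nonneg K)
  obtain ⟨D, hD, hKD⟩ := hK.isBounded.subset_closedBall_lt 0 0
  exact le_csSup ⟨D, fun ρ ⟨hρ, c, hc⟩ =>
    le_of_closedBall_subset_closedBall hρ hD.le (hc.trans hKD)⟩ ⟨hρ, c, h⟩

lemma inradius_pos (hK : IsCompact K) (hint : (interior K).Nonempty) : 0 < inradius K := by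
  obtain ⟨o, ho⟩ := hint
  obtain ⟨ρ, hρ, hball⟩ := Metric.nhds_basis_closedBall.mem_iff.1 (mem_interior_iff_mem_nhds.1 ho)
  exact hρ.trans_le (le_inradius hK hball)

lemma circumradius_nonneg (K : Set (EuclideanSpace ℝ (Fin 2))) : 0 ≤ circumradius K :=
  Real.sInf_nonneg fun _ hρ => hρ.1

lemma inradius_le_circumradius (hK : IsCompact K) : inradius K ≤ circumradius K :=
  le_circumradius hK fun _ _ hρ' hKc' => inradius_le hρ' fun _ _ hρ hcK =>
    le_of_closedBall_subset_closedBall hρ hρ' (hcK.trans hKc')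

end Radii

/-! ### Polygonal approximation of the two radii -/

section Approximation

variable {M : ℕ} {K : Set (EuclideanSpace ℝ (Fin 2))}
  {c : EuclideanSpace ℝ (Fin 2)} {t : ℝ}

lemma inradius_le_of_isMaximalInball (hK : IsCompact K) (hne : K.Nonempty)
    (hmax : IsMaximalInball (gridDir M) (fun k => supportFun K (gridDir M k)) c t) :
    inradius K ≤ t := by
  obtain ⟨x, hx⟩ := hne
  have ht : 0 ≤ t := hmax.le_radius x 0 fun k => by simpa using inner_le_supportFun hK _ hx
  refine inradius_le ht fun c' ρ hρ hball => hmax.le_radius c' ρ fun k => ?_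
  simpa using inner_add_mul_norm_le_supportFun hK hρ hball (gridDir M k)

lemma neg_le_circumradius_of_isMaximalInball (hK : IsCompact K) (hne : K.Nonempty)
    (hmax : IsMaximalInball (gridDir M) (fun k => -supportFun K (gridDir M k)) c t) :
    -t ≤ circumradius K := by
  refine le_circumradius hK fun c' ρ _ hball => neg_le.1 (hmax.le_radius (-c') (-ρ) fun k => ?_)
  have hsupp : supportFun K (gridDir M k) ≤ ⟪gridDir M k, c'⟫ + ρ := by
    refine supportFun_le hne fun x hx => ?_
    have hx' : ‖x - c'‖ ≤ ρ := mem_closedBall_iff_norm.1 (hball hx)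
    have := real_inner_le_norm (gridDir M k) (x - c')
    rw [inner_sub_right, norm_gridDir] at this
    linarith
  rw [inner_neg_right]
  linarith

variable [NeZero M]

lemma IsMaximalInball.exists_contact_in_window {h : ZMod (2 * M) → ℝ}
    (hmax : IsMaximalInball (gridDir M) h c t) (a : ZMod (2 * M)) :
    ∃ i < M, h (a + (i : ℕ)) = ⟪gridDir M (a + (i : ℕ)), c⟫ + t := by
  obtain ⟨v, hv⟩ := exists_halfPlane_inter_grid_subset_window M a
  obtain ⟨k, hk, hkv⟩ := hmax.exists_contact v
  obtain ⟨i, hi, rfl⟩ := hv k hkv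
  exact ⟨i, hi, hk⟩

lemma exists_isMaximalInball_gridDir (hM : 2 ≤ M) (h : ZMod (2 * M) → ℝ) :
    ∃ c t, IsMaximalInball (gridDir M) h c t :=
  exists_isMaximalInball (by linarith [half_le_cos_pi_div_two_mul hM])
    (exists_cos_mul_norm_le_inner_gridDir M) h

lemma le_inradius_add_of_isMaximalInball (hK : IsCompact K) (hconv : Convex ℝ K)
    (hne : K.Nonempty) {D : ℝ} (hD : ∀ x ∈ K, ‖x‖ ≤ D) (hM : 2 ≤ M)
    (hmax : IsMaximalInball (gridDir M) (fun k => supportFun K (gridDir M k)) c t) :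
    t ≤ inradius K + 3 * D * (π / (2 * M)) := by
  have hD0 : 0 ≤ D := (norm_nonneg _).trans (hD _ hne.some_mem)
  have ht : 0 ≤ t := (inradius_nonneg K).trans (inradius_le_of_isMaximalInball hK hne hmax)
  have hc : ‖c‖ ≤ 2 * D := by
    obtain ⟨k, hk⟩ := exists_cos_mul_norm_le_inner_gridDir M c
    have hsupp : supportFun K (gridDir M k) ≤ D := supportFun_le hne fun x hx =>
      (real_inner_le_norm _ _).trans (by simpa using hD x hx)
    nlinarith [hmax.inner_add_le k, half_le_cos_pi_div_two_mul hM, norm_nonneg c]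
  refine sub_le_iff_le_add.1 (le_inradius hK (c := c)
    (closedBall_subset_of_le_supportFun hK hconv hne fun v hv => ?_))
  obtain ⟨k, hk⟩ := exists_norm_sub_gridDir_le M hv
  have hcv : ⟪v, c⟫ ≤ ⟪gridDir M k, c⟫ + π / (2 * M) * (2 * D) := calc
    ⟪v, c⟫ = ⟪gridDir M k, c⟫ + ⟪v - gridDir M k, c⟫ := by rw [inner_sub_left]; ring
    _ ≤ ⟪gridDir M k, c⟫ + ‖v - gridDir M k‖ * ‖c‖ := by gcongr; exact real_inner_le_norm _ _
    _ ≤ _ := by rw [norm_sub_rev]; gcongr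
  have hsupp := supportFun_le_add_norm_sub hK hne hD (gridDir M k) v
  linarith [hmax.inner_add_le k, mul_le_mul_of_nonneg_left hk hD0]

lemma circumradius_mul_cos_le_of_isMaximalInball (hK : IsCompact K) (hne : K.Nonempty)
    (hM : 2 ≤ M)
    (hmax : IsMaximalInball (gridDir M) (fun k => -supportFun K (gridDir M k)) c t) :
    circumradius K * cos (π / (2 * M)) ≤ -t := by
  have hcos : 0 < cos (π / (2 * M)) := by linarith [half_le_cos_pi_div_two_mul hM]
  have hball (x) (hx : x ∈ K) : ‖x - -c‖ ≤ -t / cos (π / (2 * M)) := by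
    obtain ⟨k, hk⟩ := exists_cos_mul_norm_le_inner_gridDir M (x - -c)
    rw [inner_sub_right, inner_neg_right] at hk
    rw [le_div_iff₀' hcos]
    linarith [hmax.inner_add_le k, inner_le_supportFun hK (gridDir M k) hx]
  have hnonneg := (norm_nonneg _).trans (hball _ hne.some_mem)
  rw [← le_div_iff₀ hcos]
  exact circumradius_le hnonneg fun x hx => mem_closedBall_iff_norm.2 (hball x hx)

end Approximation

section Limit

lemma tendsto_pi_div_two_mul_natCast : Tendsto (fun M : ℕ => π / (2 * M)) atTop (𝓝 0) :=
  (tendsto_natCast_atTop_atTop.const_mul_atTop two_pos).const_div_atTop π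

lemma le_mul_sub_pi_mul_sq_of_approx {A L r C : ℝ}
    (H : ∀ M : ℕ, 2 ≤ M → ∃ t, |t - r| ≤ C * (π / (2 * M)) ∧
      A ≤ t * L / cos (π / (2 * M)) - π * t ^ 2) :
    A ≤ r * L - π * r ^ 2 := by
  choose! t htr hA using H
  have ht : Tendsto t atTop (𝓝 r) := by
    refine tendsto_iff_norm_sub_tendsto_zero.2 (squeeze_zero' (.of_forall fun _ => norm_nonneg _)
      ((eventually_ge_atTop 2).mono htr) ?_)
    simpa using tendsto_pi_div_two_mul_natCast.const_mul C
  have hcos : Tendsto (fun M : ℕ => cos (π / (2 * M))) atTop (𝓝 1) := by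
    rw [← cos_zero]
    exact (continuous_cos.tendsto 0).comp tendsto_pi_div_two_mul_natCast
  have hlim := ((ht.mul_const L).div hcos one_ne_zero).sub ((ht.pow 2).const_mul π)
  rw [div_one] at hlim
  exact ge_of_tendsto hlim ((eventually_ge_atTop 2).mono hA)

variable {K : Set (EuclideanSpace ℝ (Fin 2))} {L : ℝ}

lemma volume_toReal_le_inradius_mul_sub (hK : IsCompact K) (hconv : Convex ℝ K)
    (hint : (interior K).Nonempty)
    (hL : ∀ (M : ℕ) [NeZero M], 2 * sin (π / (2 * M)) * ∑ k, supportFun K (gridDir M k) ≤ L) :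
    (volume K).toReal ≤ inradius K * L - π * inradius K ^ 2 := by
  have hne : K.Nonempty := hint.mono interior_subset
  obtain ⟨D, hD⟩ := hK.isBounded.exists_norm_le
  refine le_mul_sub_pi_mul_sq_of_approx (C := 3 * D) fun M hM => ?_
  have : NeZero M := ⟨by omega⟩
  obtain ⟨c, t, hmax⟩ := exists_isMaximalInball_gridDir hM fun k => supportFun K (gridDir M k)
  have hlower := inradius_le_of_isMaximalInball hK hne hmax
  have hupper := le_inradius_add_of_isMaximalInball hK hconv hne hD hM hmax
  refine ⟨t, by rw [abs_of_nonneg (sub_nonneg.2 hlower)]; linarith, ?_⟩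
  exact volume_toReal_le_mul_div_cos_sub_pi_mul_sq hK hint hM (hL M)
    ((inradius_nonneg K).trans hlower) hmax.exists_contact_in_window

lemma volume_toReal_le_circumradius_mul_sub (hK : IsCompact K) (hint : (interior K).Nonempty)
    (hL : ∀ (M : ℕ) [NeZero M], 2 * sin (π / (2 * M)) * ∑ k, supportFun K (gridDir M k) ≤ L) :
    (volume K).toReal ≤ circumradius K * L - π * circumradius K ^ 2 := by
  have hne : K.Nonempty := hint.mono interior_subset
  have hR := circumradius_nonneg K
  refine le_mul_sub_pi_mul_sq_of_approx (C := circumradius K) fun M hM => ?_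
  have : NeZero M := ⟨by omega⟩
  obtain ⟨c, t, hmax⟩ := exists_isMaximalInball_gridDir hM fun k => -supportFun K (gridDir M k)
  have hupper := neg_le_circumradius_of_isMaximalInball hK hne hmax
  have hlower := circumradius_mul_cos_le_of_isMaximalInball hK hne hM hmax
  have hcos := half_le_cos_pi_div_two_mul hM
  refine ⟨-t, ?_, ?_⟩
  · have hα0 : 0 ≤ π / (2 * M) := by positivity
    have hsmall : 1 - cos (π / (2 * M)) ≤ π / (2 * M) := by
      nlinarith [one_sub_sq_div_two_le_cos (x := π / (2 * M)), pi_le_four,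
        pi_div_two_mul_le_pi_div_three hM]
    rw [abs_sub_comm, abs_of_nonneg (sub_nonneg.2 hupper)]
    linarith [mul_le_mul_of_nonneg_left hsmall hR]
  · refine volume_toReal_le_mul_div_cos_sub_pi_mul_sq hK hint hM (hL M) (p := -c)
      ((mul_nonneg hR (by linarith)).trans hlower) fun a => ?_
    obtain ⟨i, hi, hcontact⟩ := hmax.exists_contact_in_window a
    exact ⟨i, hi, by rw [inner_neg_right]; linarith⟩

end Limit

/-! ### From the two Bonnesen inequalities to the ratio form -/

lemma pi_mul_mul_sq_add_le {A L a b : ℝ} (ha : 0 ≤ a) (hA : A ≤ a * L - π * a ^ 2)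
    (h : 0 ≤ (L - π * (a + b)) * (b * L - π * a * (a + b))) :
    π * A * (a + b) ^ 2 ≤ a * b * L ^ 2 := by
  have hscaled := mul_le_mul_of_nonneg_left hA (mul_nonneg pi_pos.le (sq_nonneg (a + b)))
  linarith [mul_nonneg ha h]

lemma sq_mul_ratio_sq_le_of_bonnesen {A L r R : ℝ} (hr : 0 < r) (hrR : r ≤ R)
    (hAr : A ≤ r * L - π * r ^ 2) (hAR : A ≤ R * L - π * R ^ 2) :
    L ^ 2 * ((R - r) / (R + r)) ^ 2 ≤ L ^ 2 - 4 * π * A := by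
  have hR : 0 < R := hr.trans_le hrR
  suffices hmain : π * A * (R + r) ^ 2 ≤ R * r * L ^ 2 by
    rw [div_pow, ← mul_div_assoc, div_le_iff₀ (by positivity)]
    linarith
  rcases le_total (π * (R + r)) L with hLarge | hSmall
  · have hfactor : π * r * (r + R) ≤ R * L := calc
      π * r * (r + R) ≤ π * R * (r + R) := by gcongr
      _ = R * (π * (R + r)) := by ring
      _ ≤ R * L := by gcongr
    linarith [pi_mul_mul_sq_add_le (b := R) hr.le hAr (mul_nonneg (by linarith) (by linarith))]
  · have hfactor : r * L ≤ π * R * (R + r) := calc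
      r * L ≤ r * (π * (R + r)) := by gcongr
      _ = π * r * (R + r) := by ring
      _ ≤ π * R * (R + r) := by gcongr
    linarith [pi_mul_mul_sq_add_le (b := r) hR.le hAR
      (mul_nonneg_of_nonpos_of_nonpos (by linarith) (by linarith))]

/-- **A Bonnesen-type inequality.**  Let `K ⊆ ℝ²` be a compact convex set with nonempty
interior, of area `A`, boundary length `L`, circumradius `R` and inradius `r`; the
boundary length is the total variation of a continuous closed parametrization of the
topological boundary of `K`, injective on `[0,1)`.  Then `L² − 4πA ≥ L²((R − r)/(R + r))²`. -/
theorem bonnesen_type_inequality_ratio (K : Set (EuclideanSpace ℝ (Fin 2)))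
    (hcomp : IsCompact K) (hconv : Convex ℝ K) (hint : (interior K).Nonempty)
    (γ : ℝ → EuclideanSpace ℝ (Fin 2))
    (hγcont : ContinuousOn γ (Set.Icc 0 1))
    (hγclosed : γ 0 = γ 1)
    (hγinj : Set.InjOn γ (Set.Ico 0 1))
    (hγimg : γ '' Set.Icc 0 1 = frontier K)
    (L : ℝ) (hL : L = (eVariationOn γ (Set.Icc 0 1)).toReal) :
    L ^ 2 * ((circumradius K - inradius K) / (circumradius K + inradius K)) ^ 2 ≤
      L ^ 2 - 4 * Real.pi * (volume K).toReal := by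
  have hfin := eVariationOn_frontier_ne_top hcomp hconv hint hγcont hγinj hγimg
  have hcauchy (M : ℕ) [NeZero M] :
      2 * sin (π / (2 * M)) * ∑ k, supportFun K (gridDir M k) ≤ L :=
    hL ▸ two_mul_sin_mul_sum_supportFun_gridDir_le hcomp (hint.mono interior_subset)
      hγclosed hγimg hfin M
  exact sq_mul_ratio_sq_le_of_bonnesen (inradius_pos hcomp hint) (inradius_le_circumradius hcomp)
    (volume_toReal_le_inradius_mul_sub hcomp hconv hint hcauchy)
    (volume_toReal_le_circumradius_mul_sub hcomp hint hcauchy)
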